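/- Let q ∈ ℂ with 0 < |q| < 1 and let g : ℂ∖{0} → ℂ be holomorphic. Set g₀ := (1/(2πi))·∮_{|z|=1} g(z)/z dz and a := exp(g₀). Then there exists a holomorphic nowhere-vanishing function φ : ℂ∖{0} → ℂ∖{0} such that φ(q·z)/φ(z) = exp(g(z))/a for all z ∈ ℂ∖{0}; moreover any two such solutions differ by a nonzero multiplicative constant. -/

import Mathlib

open Complex

/-!
Taking `φ = exp G`, it is enough to solve the additive equation `G (q z) - G z = g z - g₀`. Split
the Laurent series of `g` as `g z = f z + h z⁻¹` with `f` and `h` entire, `f 0 = g₀` and `h 0 = 0`.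
An entire function `k` with `k 0 = 0` is `v w - v (q w)` for the entire function
`v w = ∑ₙ k (qⁿ w)`, which converges geometrically, so that `f - g₀` and `h` each contribute one
such series to `G`.

The quotient of two solutions is invariant under `z ↦ q z`, hence bounded by its values on the
compact annulus `‖q‖ ≤ ‖z‖ ≤ 1`; composed with `exp` it is a bounded entire function, which
Liouville's theorem shows to be constant.
-/

section

open Bornology Filter Metric Set Topology
open scoped Real
open Real (circleAverage circleAverage_eq_circleIntegral)

section QSeries

variable {𝕜 E : Type*} [NontriviallyNormedField 𝕜] [NormedAddCommGroup E]

theorem exists_norm_sub_le_mul_norm_sub_of_isCompact [NormedSpace 𝕜 E] {f : 𝕜 → E} {a : 𝕜}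
    {s : Set 𝕜} (hs : IsCompact s) (hsa : s ∈ 𝓝 a) (hf : ContinuousOn f s)
    (hfa : DifferentiableAt 𝕜 f a) : ∃ C, ∀ x ∈ s, ‖f x - f a‖ ≤ C * ‖x - a‖ := by
  obtain ⟨C, hC⟩ := hs.exists_bound_of_continuousOn ((continuousOn_dslope hsa).2 ⟨hf, hfa⟩)
  refine ⟨C, fun x hx ↦ ?_⟩
  rw [← sub_smul_dslope, norm_smul, mul_comm]
  gcongr
  exact hC x hx

theorem exists_norm_apply_pow_mul_le [ProperSpace 𝕜] [NormedSpace 𝕜 E] {q : 𝕜} (hq : ‖q‖ ≤ 1)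
    {f : 𝕜 → E} (hf : Continuous f) (hf' : DifferentiableAt 𝕜 f 0) (hf0 : f 0 = 0) {R : ℝ}
    (hR : 0 < R) : ∃ M, ∀ n : ℕ, ∀ w ∈ ball 0 R, ‖f (q ^ n * w)‖ ≤ ‖q‖ ^ n * M := by
  obtain ⟨C, hC⟩ := exists_norm_sub_le_mul_norm_sub_of_isCompact
    (isCompact_closedBall (0 : 𝕜) R) (closedBall_mem_nhds 0 hR) hf.continuousOn hf'
  simp only [hf0, sub_zero, mem_closedBall_zero_iff] at hC
  refine ⟨|C| * R, fun n w hw ↦ ?_⟩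
  rw [mem_ball_zero_iff] at hw
  have hnorm : ‖q ^ n * w‖ = ‖q‖ ^ n * ‖w‖ := by rw [norm_mul, norm_pow]
  have hmem : ‖q ^ n * w‖ ≤ R := by
    rw [hnorm]
    exact (mul_le_of_le_one_left (norm_nonneg w) (pow_le_one₀ (norm_nonneg q) hq)).trans hw.le
  calc ‖f (q ^ n * w)‖ ≤ C * ‖q ^ n * w‖ := hC _ hmem
    _ ≤ |C| * (‖q‖ ^ n * R) := by
      rw [hnorm]
      gcongr
      exact le_abs_self C
    _ = ‖q‖ ^ n * (|C| * R) := by ring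

/-- The series `∑ₙ f (qⁿ w)`, which formally solves the `q`-difference equation
`v w - v (q w) = f w`. -/
noncomputable def qSeries (q : 𝕜) (f : 𝕜 → E) (w : 𝕜) : E :=
  ∑' n : ℕ, f (q ^ n * w)

theorem summable_apply_pow_mul [ProperSpace 𝕜] [NormedSpace 𝕜 E] [CompleteSpace E] {q : 𝕜}
    (hq : ‖q‖ < 1) {f : 𝕜 → E} (hf : Continuous f) (hf' : DifferentiableAt 𝕜 f 0) (hf0 : f 0 = 0)
    (w : 𝕜) : Summable fun n : ℕ ↦ f (q ^ n * w) := by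
  obtain ⟨M, hM⟩ := exists_norm_apply_pow_mul_le hq.le hf hf' hf0
    (by positivity : 0 < ‖w‖ + 1)
  exact .of_norm_bounded ((summable_geometric_of_lt_one (norm_nonneg q) hq).mul_right M)
    fun n ↦ hM n w (by simp)

theorem qSeries_sub_qSeries_mul {q : 𝕜} {f : 𝕜 → E} {w : 𝕜}
    (hf : Summable fun n : ℕ ↦ f (q ^ n * w)) : qSeries q f w - qSeries q f (q * w) = f w := by
  simp only [qSeries, hf.tsum_eq_zero_add, pow_succ, mul_assoc, pow_zero, one_mul,
    add_sub_cancel_right]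

theorem differentiable_qSeries [NormedSpace ℂ E] [CompleteSpace E] {q : ℂ} (hq : ‖q‖ < 1)
    {f : ℂ → E} (hf : Differentiable ℂ f) (hf0 : f 0 = 0) : Differentiable ℂ (qSeries q f) := by
  intro w
  obtain ⟨M, hM⟩ := exists_norm_apply_pow_mul_le hq.le hf.continuous (hf 0) hf0
    (by positivity : 0 < ‖w‖ + 1)
  have hterm (n : ℕ) : Differentiable ℂ fun w ↦ f (q ^ n * w) := by fun_prop
  exact (differentiableOn_tsum_of_summable_norm
    ((summable_geometric_of_lt_one (norm_nonneg q) hq).mul_right M)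
    (fun n ↦ (hterm n).differentiableOn) isOpen_ball hM).differentiableAt
    (isOpen_ball.mem_nhds (by simp))

end QSeries

section CauchyIntegral

variable {E : Type*} [NormedAddCommGroup E] [NormedSpace ℂ E] {g : ℂ → E} {c w : ℂ} {r R : ℝ}

theorem circleIntegral_sub_inv_eq_zero_of_notMem_closedBall (hR : 0 ≤ R)
    (hw : w ∉ closedBall c R) : (∮ z in C(c, R), (z - w)⁻¹) = 0 := by
  have hd : DifferentiableOn ℂ (fun z ↦ (z - w)⁻¹) (closedBall c R) := fun z hz ↦
    ((differentiableAt_id.sub_const w).inv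
      (sub_ne_zero.2 (ne_of_mem_of_not_mem hz hw))).differentiableWithinAt
  exact (hd.mono closure_ball_subset_closedBall).diffContOnCl.circleIntegral_eq_zero hR

theorem circleIntegral_sub_inv_smul_eq_of_mem_ball (hr : 0 < r) (hrR : r ≤ R)
    (hw : w ∈ ball c r) (hg : ContinuousOn g (closedBall c R \ ball c r))
    (hd : DifferentiableOn ℂ g (ball c R \ closedBall c r)) :
    (∮ z in C(c, R), (z - w)⁻¹ • g z) = ∮ z in C(c, r), (z - w)⁻¹ • g z := by
  have hne {z : ℂ} (hz : z ∉ ball c r) : z - w ≠ 0 :=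
    sub_ne_zero.2 (ne_of_mem_of_not_mem hw hz).symm
  have hopen : IsOpen (ball c R \ closedBall c r) := isOpen_ball.sdiff isClosed_closedBall
  refine circleIntegral_eq_of_differentiable_on_annulus_off_countable hr hrR countable_empty
    (.smul (.inv₀ (by fun_prop) fun z hz ↦ hne hz.2) hg) fun z hz ↦ ?_
  exact ((differentiableAt_id.sub_const w).inv
    (hne fun h ↦ hz.1.2 (ball_subset_closedBall h))).smul
    (hd.differentiableAt (hopen.mem_nhds hz.1))

theorem circleIntegral_dslope [CompleteSpace E] (hR : 0 ≤ R) (hw : w ∉ sphere c R)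
    (hg : ContinuousOn g (sphere c R)) :
    (∮ z in C(c, R), dslope g w z) =
      (∮ z in C(c, R), (z - w)⁻¹ • g z) - (∮ z in C(c, R), (z - w)⁻¹) • g w := by
  have hne {z : ℂ} (hz : z ∈ sphere c R) : z ≠ w := ne_of_mem_of_not_mem hz hw
  have hinv : ContinuousOn (fun z ↦ (z - w)⁻¹) (sphere c R) :=
    .inv₀ (by fun_prop) fun z hz ↦ sub_ne_zero.2 (hne hz)
  have hkernel : CircleIntegrable (fun z ↦ (z - w)⁻¹ • g z) c R :=
    (hinv.smul hg).circleIntegrable hR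
  have hconst : CircleIntegrable (fun z ↦ (z - w)⁻¹ • g w) c R :=
    (hinv.smul continuousOn_const).circleIntegrable hR
  rw [← circleIntegral.integral_smul_const, ← circleIntegral.integral_sub hkernel hconst]
  refine circleIntegral.integral_congr hR fun z hz ↦ ?_
  simp only [dslope_of_ne _ (hne hz), slope_def_module, smul_sub]

theorem circleIntegral_sub_inv_smul_sub_of_mem_annulus [CompleteSpace E] (hr : 0 < r)
    (hw : w ∈ ball c R \ closedBall c r) (hg : ContinuousOn g (closedBall c R \ ball c r))
    (hd : DifferentiableOn ℂ g (ball c R \ closedBall c r)) :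
    (∮ z in C(c, R), (z - w)⁻¹ • g z) - (∮ z in C(c, r), (z - w)⁻¹ • g z) =
      (2 * π * I : ℂ) • g w := by
  have hopen : IsOpen (ball c R \ closedBall c r) := isOpen_ball.sdiff isClosed_closedBall
  have hrR : r < R := (not_le.1 hw.2).trans hw.1
  have hannulus : closedBall c R \ ball c r ∈ 𝓝 w := mem_of_superset (hopen.mem_nhds hw)
    (sdiff_subset_sdiff ball_subset_closedBall ball_subset_closedBall)
  have hinv : (∮ z in C(c, R), dslope g w z) = ∮ z in C(c, r), dslope g w z := by
    refine circleIntegral_eq_of_differentiable_on_annulus_off_countable hr hrR.le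
      countable_empty ((continuousOn_dslope hannulus).2
        ⟨hg, hd.differentiableAt (hopen.mem_nhds hw)⟩) fun z hz ↦ ?_
    exact ((differentiableOn_dslope (hopen.mem_nhds hw)).2 hd).differentiableAt
      (hopen.mem_nhds hz.1)
  have hsphereR : sphere c R ⊆ closedBall c R \ ball c r := fun z hz ↦
    ⟨sphere_subset_closedBall hz, fun h ↦ (mem_ball.1 h).not_ge (hrR.le.trans_eq hz.symm)⟩
  have hspherer : sphere c r ⊆ closedBall c R \ ball c r := fun z hz ↦
    ⟨(mem_sphere.1 hz).trans_le hrR.le, fun h ↦ (mem_ball.1 h).ne hz⟩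
  rw [circleIntegral_dslope (hr.trans hrR).le (fun h ↦ (mem_ball.1 hw.1).ne h)
      (hg.mono hsphereR),
    circleIntegral_dslope hr.le (fun h ↦ hw.2 (sphere_subset_closedBall h)) (hg.mono hspherer),
    circleIntegral.integral_sub_inv_of_mem_ball hw.1,
    circleIntegral_sub_inv_eq_zero_of_notMem_closedBall hr.le hw.2, zero_smul, sub_zero] at hinv
  rw [← hinv, sub_sub_cancel]

theorem tendsto_circleIntegral_sub_inv_smul_cobounded (hR : 0 ≤ R)
    (hg : ContinuousOn g (sphere c R)) :
    Tendsto (fun w ↦ ∮ z in C(c, R), (z - w)⁻¹ • g z) (cobounded ℂ) (𝓝 0) := by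
  obtain ⟨M, hM⟩ := (isCompact_sphere c R).exists_bound_of_continuousOn hg
  have hdist : Tendsto (fun w ↦ dist w c - R) (cobounded ℂ) atTop :=
    tendsto_atTop_add_const_right _ _ (tendsto_dist_right_cobounded_atTop c)
  have hbound : Tendsto (fun w ↦ 2 * π * R * ((dist w c - R)⁻¹ * M)) (cobounded ℂ) (𝓝 0) := by
    simpa using (hdist.inv_tendsto_atTop.mul_const M).const_mul (2 * π * R)
  refine squeeze_zero_norm' ?_ hbound
  filter_upwards [hdist.eventually_gt_atTop 0] with w hw
  refine circleIntegral.norm_integral_le_of_norm_le_const hR fun z hz ↦ ?_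
  have hsep : dist w c - R ≤ ‖z - w‖ := by
    rw [← dist_eq_norm, sub_le_iff_le_add, ← mem_sphere.1 hz, dist_comm z w]
    exact dist_triangle w z c
  rw [norm_smul, norm_inv]
  gcongr
  exact hM z hz

end CauchyIntegral

theorem differentiable_update_of_tendsto {E : Type*} [NormedAddCommGroup E] [NormedSpace ℂ E]
    [CompleteSpace E] {f : ℂ → E} {c : ℂ} {y : E} (hf : DifferentiableOn ℂ f {c}ᶜ)
    (hlim : Tendsto f (𝓝[≠] c) (𝓝 y)) : Differentiable ℂ (Function.update f c y) := by
  rw [← differentiableOn_univ,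
    ← differentiableOn_compl_singleton_and_continuousAt_iff (c := c) univ_mem,
    continuousAt_update_same, ← compl_eq_univ_sdiff]
  exact ⟨hf.congr fun z hz ↦ Function.update_of_ne hz _ _, hlim⟩

section LaurentSplitting

variable {E : Type*} [NormedAddCommGroup E] [NormedSpace ℂ E] {g : ℂ → E} {w z : ℂ} {r R : ℝ}

theorem closedBall_diff_ball_subset_compl_zero (hr : 0 < r) :
    closedBall (0 : ℂ) R \ ball 0 r ⊆ {0}ᶜ := by
  rintro z hz rfl
  exact hz.2 (mem_ball_self hr)

/-- The sum of the terms of nonnegative degree in the Laurent series at `0` of a function `g` on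
the punctured plane, written as a Cauchy integral. The radius `‖w‖ + 1` is an arbitrary choice of a
radius exceeding `‖w‖`. -/
noncomputable def regularPart (g : ℂ → E) (w : ℂ) : E :=
  (2 * π * I : ℂ)⁻¹ • ∮ z in C(0, ‖w‖ + 1), (z - w)⁻¹ • g z

theorem regularPart_eq_of_norm_lt (hg : DifferentiableOn ℂ g {0}ᶜ) (hw : ‖w‖ < R) :
    regularPart g w = (2 * π * I : ℂ)⁻¹ • ∮ z in C(0, R), (z - w)⁻¹ • g z := by
  have hmono {r R : ℝ} (hw : ‖w‖ < r) (hrR : r ≤ R) :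
      (∮ z in C(0, R), (z - w)⁻¹ • g z) = ∮ z in C(0, r), (z - w)⁻¹ • g z := by
    have hr : 0 < r := (norm_nonneg w).trans_lt hw
    have hsub := closedBall_diff_ball_subset_compl_zero (R := R) hr
    exact circleIntegral_sub_inv_smul_eq_of_mem_ball hr hrR (mem_ball_zero_iff.2 hw)
      (hg.continuousOn.mono hsub)
      (hg.mono ((sdiff_subset_sdiff ball_subset_closedBall ball_subset_closedBall).trans hsub))
  rw [regularPart]
  rcases le_total R (‖w‖ + 1) with h | h
  · rw [hmono hw h]
  · rw [hmono (lt_add_one ‖w‖) h]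

theorem regularPart_zero (g : ℂ → E) : regularPart g 0 = circleAverage g 0 1 := by
  rw [regularPart, circleAverage_eq_circleIntegral one_ne_zero, norm_zero, zero_add]

theorem differentiable_regularPart [CompleteSpace E] (hg : DifferentiableOn ℂ g {0}ᶜ) :
    Differentiable ℂ (regularPart g) := by
  intro w
  have hR : 0 < ‖w‖₊ + 1 := by positivity
  have hw : w ∈ ball (0 : ℂ) ↑(‖w‖₊ + 1) := by simp
  have hint : CircleIntegrable g 0 ↑(‖w‖₊ + 1) := by
    refine (hg.continuousOn.mono fun z hz ↦ ?_).circleIntegrable (NNReal.coe_nonneg _)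
    exact ne_of_mem_sphere hz (NNReal.coe_pos.2 hR).ne'
  have hd := (hasFPowerSeriesOn_cauchy_integral hint hR).differentiableOn
  rw [eball_coe] at hd
  refine (hd.differentiableAt (isOpen_ball.mem_nhds hw)).congr_of_eventuallyEq ?_
  filter_upwards [isOpen_ball.mem_nhds hw] with v hv
  exact regularPart_eq_of_norm_lt hg (mem_ball_zero_iff.1 hv)

theorem sub_regularPart_eq [CompleteSpace E] (hg : DifferentiableOn ℂ g {0}ᶜ) (hr : 0 < r)
    (hw : r < ‖w‖) :
    g w - regularPart g w = -((2 * π * I : ℂ)⁻¹ • ∮ z in C(0, r), (z - w)⁻¹ • g z) := by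
  have hsub := closedBall_diff_ball_subset_compl_zero (R := ‖w‖ + 1) hr
  have hcauchy := circleIntegral_sub_inv_smul_sub_of_mem_annulus hr (c := 0) (R := ‖w‖ + 1)
    (w := w) (by simpa using hw) (hg.continuousOn.mono hsub)
    (hg.mono ((sdiff_subset_sdiff ball_subset_closedBall ball_subset_closedBall).trans hsub))
  rw [regularPart, ← inv_smul_smul₀ two_pi_I_ne_zero (g w), ← hcauchy, smul_sub, sub_right_comm,
    sub_self, zero_sub]

theorem tendsto_sub_regularPart_cobounded [CompleteSpace E] (hg : DifferentiableOn ℂ g {0}ᶜ) :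
    Tendsto (fun w ↦ g w - regularPart g w) (cobounded ℂ) (𝓝 0) := by
  have hsphere : ContinuousOn g (sphere 0 1) :=
    hg.continuousOn.mono fun z hz ↦ ne_of_mem_sphere hz one_ne_zero
  have hlim := ((tendsto_circleIntegral_sub_inv_smul_cobounded zero_le_one hsphere).const_smul
    (2 * π * I : ℂ)⁻¹).neg
  rw [smul_zero, neg_zero] at hlim
  refine hlim.congr' ?_
  filter_upwards [tendsto_norm_cobounded_atTop.eventually_gt_atTop 1] with w hw
  exact (sub_regularPart_eq hg one_pos hw).symm

/-- The sum of the terms of negative degree in the Laurent series at `0` of a function `g` on the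
punctured plane, as a function of `w = z⁻¹`. The value at `w = 0` is the limit for `z → ∞`. -/
noncomputable def principalPart (g : ℂ → E) : ℂ → E :=
  Function.update (fun w ↦ g w⁻¹ - regularPart g w⁻¹) 0 0

theorem principalPart_zero (g : ℂ → E) : principalPart g 0 = 0 :=
  Function.update_self ..

theorem regularPart_add_principalPart_inv (g : ℂ → E) (hz : z ≠ 0) :
    regularPart g z + principalPart g z⁻¹ = g z := by
  rw [principalPart, Function.update_of_ne (inv_ne_zero hz), inv_inv, add_sub_cancel]

theorem differentiable_principalPart [CompleteSpace E] (hg : DifferentiableOn ℂ g {0}ᶜ) :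
    Differentiable ℂ (principalPart g) := by
  have hinv : MapsTo (fun w : ℂ ↦ w⁻¹) {0}ᶜ {0}ᶜ := fun w hw ↦ inv_ne_zero hw
  exact differentiable_update_of_tendsto
    ((hg.sub (differentiable_regularPart hg).differentiableOn).comp differentiableOn_inv hinv)
    ((tendsto_sub_regularPart_cobounded hg).comp tendsto_inv₀_nhdsNE_zero)

theorem exists_apply_mul_sub_apply_eq_sub_circleAverage [CompleteSpace E] {q : ℂ} (hq0 : q ≠ 0)
    (hq1 : ‖q‖ < 1) (hg : DifferentiableOn ℂ g {0}ᶜ) :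
    ∃ G : ℂ → E, DifferentiableOn ℂ G {0}ᶜ ∧
      ∀ z ≠ 0, G (q * z) - G z = g z - circleAverage g 0 1 := by
  set f : ℂ → E := fun z ↦ regularPart g z - regularPart g 0
  have hf : Differentiable ℂ f := (differentiable_regularPart hg).sub_const _
  have hf0 : f 0 = 0 := sub_self _
  have hh := differentiable_principalPart hg
  have hh0 := principalPart_zero g
  have hv (z : ℂ) : qSeries q f z - qSeries q f (q * z) = f z :=
    qSeries_sub_qSeries_mul (summable_apply_pow_mul hq1 hf.continuous (hf 0) hf0 z)
  have hu (z : ℂ) := qSeries_sub_qSeries_mul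
    (summable_apply_pow_mul hq1 hh.continuous (hh 0) hh0 z)
  refine ⟨fun z ↦ qSeries q (principalPart g) (q * z⁻¹) - qSeries q f z, ?_, fun z hz ↦ ?_⟩
  · exact ((differentiable_qSeries hq1 hh hh0).comp_differentiableOn
      (differentiableOn_inv.const_mul q)).sub (differentiable_qSeries hq1 hf hf0).differentiableOn
  · have hqz : q * (q * z)⁻¹ = z⁻¹ := by rw [mul_inv, mul_inv_cancel_left₀ hq0]
    calc qSeries q (principalPart g) (q * (q * z)⁻¹) - qSeries q f (q * z) -
          (qSeries q (principalPart g) (q * z⁻¹) - qSeries q f z)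
        = (qSeries q (principalPart g) z⁻¹ - qSeries q (principalPart g) (q * z⁻¹)) +
          (qSeries q f z - qSeries q f (q * z)) := by rw [hqz]; abel
      _ = regularPart g z + principalPart g z⁻¹ - regularPart g 0 := by
        rw [hu, hv]
        simp only [f]
        abel
      _ = g z - circleAverage g 0 1 := by
        rw [regularPart_add_principalPart_inv g hz, regularPart_zero]

end LaurentSplitting

section Uniqueness

theorem apply_zpow_mul_of_apply_mul {K β : Type*} [GroupWithZero K] {q : K} (hq : q ≠ 0)
    {p : K → β} (hp : ∀ z ≠ 0, p (q * z) = p z) (n : ℤ) {z : K} (hz : z ≠ 0) :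
    p (q ^ n * z) = p z := by
  have hne (n : ℤ) : q ^ n * z ≠ 0 := mul_ne_zero (zpow_ne_zero n hq) hz
  have hsucc (n : ℤ) : p (q ^ (n + 1) * z) = p (q ^ n * z) := by
    rw [add_comm, zpow_one_add₀ hq, mul_assoc, hp _ (hne n)]
  induction n with
  | zero => rw [zpow_zero, one_mul]
  | succ n ih => rw [hsucc, ih]
  | pred n ih => rw [← hsucc, sub_add_cancel, ih]

theorem isBounded_image_compl_zero_of_apply_mul {𝕜 β : Type*} [NormedField 𝕜] [ProperSpace 𝕜]
    [PseudoMetricSpace β] {q : 𝕜} (hq0 : q ≠ 0) (hq1 : ‖q‖ < 1) {p : 𝕜 → β}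
    (hc : ContinuousOn p {0}ᶜ) (hp : ∀ z ≠ 0, p (q * z) = p z) : IsBounded (p '' {0}ᶜ) := by
  have hcompact : IsCompact (closedBall (0 : 𝕜) 1 \ ball 0 ‖q‖) :=
    (isCompact_closedBall 0 1).diff isOpen_ball
  refine (hcompact.image_of_continuousOn (hc.mono ?_)).isBounded.subset ?_
  · rintro z hz rfl
    exact hz.2 (mem_ball_self (norm_pos_iff.2 hq0))
  · rintro _ ⟨z, hz, rfl⟩
    obtain ⟨n, -, hlt, hge, -⟩ := rescale_to_shell_zpow
      (by rw [norm_inv]; exact (one_lt_inv₀ (norm_pos_iff.2 hq0)).2 hq1 : 1 < ‖q⁻¹‖) one_pos hz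
    rw [inv_zpow', smul_eq_mul] at hlt hge
    rw [norm_inv, one_div, inv_inv] at hge
    exact ⟨q ^ (-n) * z, ⟨mem_closedBall_zero_iff.2 hlt.le, fun h ↦
      (mem_ball_zero_iff.1 h).not_ge hge⟩, apply_zpow_mul_of_apply_mul hq0 hp (-n) hz⟩

theorem apply_eq_apply_of_isBounded_image_compl_zero {E : Type*} [NormedAddCommGroup E]
    [NormedSpace ℂ E] {p : ℂ → E} (hp : DifferentiableOn ℂ p {0}ᶜ) (hb : IsBounded (p '' {0}ᶜ))
    {z w : ℂ} (hz : z ≠ 0) (hw : w ≠ 0) : p z = p w := by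
  have hd : Differentiable ℂ fun t ↦ p (exp t) := fun t ↦
    (hp.differentiableAt (isOpen_ne.mem_nhds (exp_ne_zero t))).comp t differentiableAt_exp
  have hrange : range (fun t ↦ p (exp t)) ⊆ p '' {0}ᶜ := by
    rintro _ ⟨t, rfl⟩
    exact mem_image_of_mem p (exp_ne_zero t)
  simpa only [exp_log hz, exp_log hw] using
    hd.apply_eq_apply_of_bounded (hb.subset hrange) (log z) (log w)

theorem exists_eq_const_mul_of_apply_mul_div_eq {q : ℂ} (hq0 : q ≠ 0) (hq1 : ‖q‖ < 1)
    {φ ψ : ℂ → ℂ} (hφ : DifferentiableOn ℂ φ {0}ᶜ) (hψ : DifferentiableOn ℂ ψ {0}ᶜ)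
    (hφ0 : ∀ z ≠ 0, φ z ≠ 0) (hψ0 : ∀ z ≠ 0, ψ z ≠ 0)
    (h : ∀ z ≠ 0, ψ (q * z) / ψ z = φ (q * z) / φ z) :
    ∃ c ≠ 0, ∀ z ≠ 0, ψ z = c * φ z := by
  have hinv (z : ℂ) (hz : z ≠ 0) : (ψ / φ) (q * z) = (ψ / φ) z :=
    (div_eq_div_iff_div_eq_div' (hψ0 z hz) (hφ0 _ (mul_ne_zero hq0 hz))).1 (h z hz)
  have hd : DifferentiableOn ℂ (ψ / φ) {0}ᶜ := hψ.div hφ hφ0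
  have hb := isBounded_image_compl_zero_of_apply_mul hq0 hq1 hd.continuousOn hinv
  refine ⟨ψ 1 / φ 1, div_ne_zero (hψ0 1 one_ne_zero) (hφ0 1 one_ne_zero), fun z hz ↦ ?_⟩
  exact (div_eq_iff (hφ0 z hz)).1
    (apply_eq_apply_of_isBounded_image_compl_zero hd hb hz one_ne_zero)

end Uniqueness

theorem circleAverage_zero_eq_circleIntegral_div (g : ℂ → ℂ) {R : ℝ} (hR : R ≠ 0) :
    circleAverage g 0 R = 1 / (2 * π * I) * ∮ z in C(0, R), g z / z := by
  simp only [circleAverage_eq_circleIntegral hR, sub_zero, smul_eq_mul, div_eq_inv_mul, mul_one]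

end

/-- there is a holomorphic nowhere-vanishing `φ` on the punctured plane with
`φ(q·z)/φ(z) = exp(g(z))/a` where `a = exp(g₀)`, `g₀` the zeroth Laurent coefficient of `g`;
uniqueness up to a nonzero multiplicative constant. -/
theorem statement1 (q : ℂ) (hq0 : 0 < ‖q‖) (hq1 : ‖q‖ < 1)
    (g : ℂ → ℂ) (hg : DifferentiableOn ℂ g {z : ℂ | z ≠ 0}) :
    (∃ φ : ℂ → ℂ, DifferentiableOn ℂ φ {z : ℂ | z ≠ 0} ∧
        (∀ z : ℂ, z ≠ 0 → φ z ≠ 0) ∧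
        ∀ z : ℂ, z ≠ 0 →
          φ (q * z) / φ z =
            Complex.exp (g z) /
              Complex.exp ((1 / (2 * (Real.pi : ℂ) * Complex.I)) * (∮ z in C(0, 1), g z / z))) ∧
    ∀ φ φ' : ℂ → ℂ,
      DifferentiableOn ℂ φ {z : ℂ | z ≠ 0} →
      (∀ z : ℂ, z ≠ 0 → φ z ≠ 0) →
      (∀ z : ℂ, z ≠ 0 →
        φ (q * z) / φ z =
          Complex.exp (g z) /
            Complex.exp ((1 / (2 * (Real.pi : ℂ) * Complex.I)) * (∮ z in C(0, 1), g z / z))) →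
      DifferentiableOn ℂ φ' {z : ℂ | z ≠ 0} →
      (∀ z : ℂ, z ≠ 0 → φ' z ≠ 0) →
      (∀ z : ℂ, z ≠ 0 →
        φ' (q * z) / φ' z =
          Complex.exp (g z) /
            Complex.exp ((1 / (2 * (Real.pi : ℂ) * Complex.I)) * (∮ z in C(0, 1), g z / z))) →
      ∃ c : ℂ, c ≠ 0 ∧ ∀ z : ℂ, z ≠ 0 → φ' z = c * φ z := by
  have hq : q ≠ 0 := norm_pos_iff.1 hq0
  constructor
  · obtain ⟨G, hG, hqG⟩ := exists_apply_mul_sub_apply_eq_sub_circleAverage hq hq1 hg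
    refine ⟨fun z ↦ exp (G z), hG.cexp, fun z _ ↦ exp_ne_zero _, fun z hz ↦ ?_⟩
    rw [← exp_sub, ← exp_sub, hqG z hz, circleAverage_zero_eq_circleIntegral_div g one_ne_zero]
  · intro φ φ' hφ hφ0 hφq hφ' hφ'0 hφ'q
    exact exists_eq_const_mul_of_apply_mul_div_eq hq hq1 hφ hφ' hφ0 hφ'0 fun z hz ↦
      (hφ'q z hz).trans (hφq z hz).symm
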